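/- arXiv:0910.4063 — 4 statements merged into one kernel-verified Lean document; each statement's English description precedes it below -/
import Mathlib

section
/- Assume that [ω]^{<ω} ⊆ X ⊆ P(ℕ), and let e ≥ 1 be a natural number. For each open ω-cover 𝒰 of X^e there are natural numbers m₀ < m₁ < m₂ < … and sets U₀,U₁,U₂,… ∈ 𝒰 such that for all n and all x₀,…,x_{e−1} ⊆ ℕ: if xᵢ ∩ (mₙ, mₙ₊₁) = ∅ for all i < e, then (x₀,…,x_{e−1}) ∈ Uₙ. -/
open Set Topology

open scoped Classical in
/-- The Cantor-space topology on `P(ℕ)`, induced by characteristic functions. -/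
noncomputable def cantorTopology : TopologicalSpace (Set ℕ) :=
  TopologicalSpace.induced (fun (s : Set ℕ) (n : ℕ) => decide (n ∈ s)) inferInstance

/-- `𝒰` is an ω-cover of `S`: no member of `𝒰` contains `S`, but every finite
subset of `S` is contained in some member of `𝒰`. -/
def OmegaCover {Y : Type*} (𝒰 : Set (Set Y)) (S : Set Y) : Prop :=
  (∀ U ∈ 𝒰, ¬ S ⊆ U) ∧ ∀ F : Set Y, F ⊆ S → F.Finite → ∃ U ∈ 𝒰, F ⊆ U

theorem nbhd_aux (e : ℕ) (U : Set (Fin e → Set ℕ))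
    (hU : IsOpen[@Pi.topologicalSpace (Fin e) (fun _ => Set ℕ) (fun _ => cantorTopology)] U)
    (f : Fin e → Set ℕ) (hf : f ∈ U) :
    ∃ N : ℕ, ∀ x : Fin e → Set ℕ, (∀ i, ∀ k < N, (k ∈ x i ↔ k ∈ f i)) → x ∈ U := by
  classical
  by_contra! h
  choose x hx hxU using h
  letI : TopologicalSpace (Set ℕ) := cantorTopology
  have ht : Filter.Tendsto x Filter.atTop (𝓝 f) := by
    rw [tendsto_pi_nhds]
    intro i
    have hi : IsInducing (fun (s : Set ℕ) (n : ℕ) => decide (n ∈ s)) := by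
      constructor
      change cantorTopology = _
      unfold cantorTopology
      congr!
    rw [hi.nhds_eq_comap, Filter.tendsto_comap_iff, tendsto_pi_nhds]
    intro k
    apply tendsto_nhds_of_eventually_eq
    filter_upwards [Filter.eventually_gt_atTop k] with N hN
    simp [hx N i k hN]
  obtain ⟨N, hN⟩ := (ht.eventually (hU.mem_nhds hf)).exists
  exact hxU N hN

theorem step_aux (X : Set (Set ℕ)) (hX : {s : Set ℕ | s.Finite} ⊆ X) (e : ℕ)
    (𝒰 : Set (Set (Fin e → Set ℕ)))
    (hopen : ∀ U ∈ 𝒰,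
      IsOpen[@Pi.topologicalSpace (Fin e) (fun _ => Set ℕ) (fun _ => cantorTopology)] U)
    (hcover : OmegaCover 𝒰 (Set.univ.pi fun _ : Fin e => X)) (m : ℕ) :
    ∃ (m' : ℕ) (U : Set (Fin e → Set ℕ)), m < m' ∧ U ∈ 𝒰 ∧ ∀ x : Fin e → Set ℕ,
        (∀ i : Fin e, ∀ k, m < k → k < m' → k ∉ x i) → x ∈ U := by
  have hF : (Set.univ.pi fun _ : Fin e => 𝒫 (Set.Iic m)).Finite :=
    Set.Finite.pi fun _ => (Set.finite_Iic m).finite_subsets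
  obtain ⟨U, hU, hFU⟩ := hcover.2 (Set.univ.pi fun _ : Fin e => 𝒫 (Set.Iic m))
    (fun f hf i hi => hX ((Set.finite_Iic m).subset (hf i hi))) hF
  choose! N hN using fun f hf => nbhd_aux e U (hopen U hU) f (hFU hf)
  obtain ⟨B, hB⟩ := (hF.image N).bddAbove
  refine ⟨max (m + 1) B, U, by omega, hU, fun x hx => ?_⟩
  have hf : (fun i => x i ∩ Set.Iic m) ∈ (Set.univ.pi fun _ : Fin e => 𝒫 (Set.Iic m)) :=
    fun i _ => Set.inter_subset_right
  have hle : N (fun i => x i ∩ Set.Iic m) ≤ B := hB ⟨_, hf, rfl⟩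
  refine hN _ hf x fun i k hk => ⟨fun h => ⟨h, ?_⟩, fun h => h.1⟩
  by_contra hkm
  exact hx i k (not_le.1 hkm) (by omega) h

/-- For `[ω]^{<ω} ⊆ X ⊆ P(ℕ)`, `e ≥ 1`, and an open ω-cover `𝒰` of `X^e`,
there are `m₀ < m₁ < ⋯` and `U₀, U₁, ⋯ ∈ 𝒰` such that `(x₀,…,x_{e-1}) ∈ Uₙ`
whenever `xᵢ ∩ (mₙ, mₙ₊₁) = ∅` for all `i < e`. -/
theorem stmt_5 (X : Set (Set ℕ)) (hX : {s : Set ℕ | s.Finite} ⊆ X) (e : ℕ) (he : 1 ≤ e)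
    (𝒰 : Set (Set (Fin e → Set ℕ)))
    (hopen : ∀ U ∈ 𝒰,
      IsOpen[@Pi.topologicalSpace (Fin e) (fun _ => Set ℕ) (fun _ => cantorTopology)] U)
    (hcover : OmegaCover 𝒰 (Set.univ.pi fun _ : Fin e => X)) :
    ∃ (m : ℕ → ℕ) (U : ℕ → Set (Fin e → Set ℕ)), StrictMono m ∧ (∀ n, U n ∈ 𝒰) ∧
      ∀ (n : ℕ) (x : Fin e → Set ℕ),
        (∀ i : Fin e, ∀ k, m n < k → k < m (n + 1) → k ∉ x i) → x ∈ U n := by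
  choose g V hg hV hx using step_aux X hX e 𝒰 hopen hcover
  refine ⟨fun n => g^[n] 0, fun n => V (g^[n] 0), strictMono_nat_of_lt_succ fun n => ?_,
    fun n => hV _, fun n x h => hx _ x ?_⟩
  · rw [Function.iterate_succ_apply']
    exact hg _
  · simpa only [Function.iterate_succ_apply'] using h
end

section
/- For each infinite cardinal κ, the following are equivalent: (1) every ω-splitting family ℋ ⊆ [ω]^ω contains an ω-splitting subfamily of cardinality less than κ; (2) every ω-hitting family ℋ ⊆ [ω]^ω contains an ω-hitting subfamily of cardinality less than κ. -/
open Set Topology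

/-- `H` splits `A`: both `A ∩ H` and `A \ H` are infinite. -/
def Splits (H A : Set ℕ) : Prop := (A ∩ H).Infinite ∧ (A \ H).Infinite

/-- `ℋ` is ω-splitting: for each countable `𝒜 ⊆ [ω]^ω` some `H ∈ ℋ` splits
every member of `𝒜`. -/
def OmegaSplitting (ℋ : Set (Set ℕ)) : Prop :=
  ∀ 𝒜 : Set (Set ℕ), 𝒜.Countable → (∀ A ∈ 𝒜, A.Infinite) →
    ∃ H ∈ ℋ, ∀ A ∈ 𝒜, Splits H A

/-- `ℋ` is ω-hitting: for each countable `𝒜 ⊆ [ω]^ω` some `H ∈ ℋ` has infinite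
intersection with every member of `𝒜`. -/
def OmegaHitting (ℋ : Set (Set ℕ)) : Prop :=
  ∀ 𝒜 : Set (Set ℕ), 𝒜.Countable → (∀ A ∈ 𝒜, A.Infinite) →
    ∃ H ∈ ℋ, ∀ A ∈ 𝒜, (A ∩ H).Infinite

/-- A countable family of infinite sets is split by a single subset of `ℕ`. -/
theorem exists_splits_seq (A : ℕ → Set ℕ) (hA : ∀ n, (A n).Infinite) :
    ∃ S : Set ℕ, ∀ n, Splits S (A n) := by
  have h : ∀ n m, ∃ x ∈ A n, m < x := fun n m => (hA n).exists_gt m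
  choose f hf hlt using h
  let b : ℕ → ℕ := fun k => Nat.rec (f (Nat.unpair 0).1 0)
    (fun k r => f (Nat.unpair (k + 1)).1 r) k
  have hb : StrictMono b := strictMono_nat_of_lt_succ fun k => hlt _ _
  have hmem : ∀ k, b k ∈ A (Nat.unpair k).1 := by
    intro k
    cases k with
    | zero => exact hf _ _
    | succ k => exact hf _ _
  refine ⟨{x | ∃ k, b k = x ∧ (Nat.unpair k).2 % 2 = 0}, fun n => ⟨?_, ?_⟩⟩
  · refine Set.infinite_of_injective_forall_mem (f := fun j => b (Nat.pair n (2 * j))) ?_ ?_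
    · intro i j hij
      have := hb.injective hij
      rw [Nat.pair_eq_pair] at this
      omega
    · intro j
      refine ⟨?_, Nat.pair n (2 * j), rfl, by simp⟩
      simpa using hmem (Nat.pair n (2 * j))
  · refine Set.infinite_of_injective_forall_mem (f := fun j => b (Nat.pair n (2 * j + 1))) ?_ ?_
    · intro i j hij
      have := hb.injective hij
      rw [Nat.pair_eq_pair] at this
      omega
    · intro j
      refine ⟨?_, ?_⟩
      · simpa using hmem (Nat.pair n (2 * j + 1))
      · rintro ⟨k, hk, hk2⟩
        have := hb.injective hk
        subst this
        rw [Nat.unpair_pair] at hk2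
        dsimp only at hk2
        omega

/-- Encoding of `H ⊔ Hᶜ` in `ℕ ⊔ ℕ ≃ ℕ`. -/
def enc (H : Set ℕ) : Set ℕ := {n | n % 2 = 0 ↔ n / 2 ∈ H}

theorem enc_infinite (H : Set ℕ) : (enc H).Infinite := by
  classical
  refine Set.infinite_of_injective_forall_mem
    (f := fun j => if j ∈ H then 2 * j else 2 * j + 1) ?_ ?_
  · intro i j hij
    dsimp only at hij
    split_ifs at hij <;> omega
  · intro j
    by_cases h : j ∈ H
    · simp [enc, h]
    · have h2 : (2 * j + 1) / 2 = j := by omega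
      simp [enc, h, h2]

/-- For each infinite cardinal `κ`: every ω-splitting family contains an
ω-splitting subfamily of cardinality `< κ` if, and only if, every ω-hitting
family contains an ω-hitting subfamily of cardinality `< κ`. -/
theorem stmt_9 (κ : Cardinal) (hκ : Cardinal.aleph0 ≤ κ) :
    (∀ ℋ : Set (Set ℕ), (∀ H ∈ ℋ, H.Infinite) → OmegaSplitting ℋ →
      ∃ ℋ' ⊆ ℋ, Cardinal.mk ℋ' < κ ∧ OmegaSplitting ℋ') ↔
    (∀ ℋ : Set (Set ℕ), (∀ H ∈ ℋ, H.Infinite) → OmegaHitting ℋ →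
      ∃ ℋ' ⊆ ℋ, Cardinal.mk ℋ' < κ ∧ OmegaHitting ℋ') := by
  constructor
  · intro h1 ℋ _ hℋ
    obtain ⟨𝒮, h𝒮, hcard, hsp⟩ := h1 {S | S.Infinite ∧ ∃ H ∈ ℋ, S ⊆ H} (fun S hS => hS.1) (by
      intro 𝒜 hc hinf
      obtain ⟨H, hH, hhit⟩ := hℋ (insert univ 𝒜) (hc.insert _) (by
        rintro A (rfl | hA)
        · exact Set.infinite_univ
        · exact hinf A hA)
      obtain ⟨e, he⟩ := (hc.insert univ).exists_eq_range (Set.insert_nonempty _ _)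
      obtain ⟨S, hS⟩ := exists_splits_seq (fun n => e n ∩ H)
        (fun n => hhit _ (he ▸ Set.mem_range_self n))
      have key : ∀ A ∈ insert univ 𝒜, Splits (S ∩ H) A := by
        intro A hA
        rw [he] at hA
        obtain ⟨n, rfl⟩ := hA
        refine ⟨(hS n).1.mono ?_, (hS n).2.mono ?_⟩
        · rintro x ⟨⟨h1, h2⟩, h3⟩
          exact ⟨h1, h3, h2⟩
        · rintro x ⟨⟨h1, h2⟩, h3⟩
          exact ⟨h1, fun h => h3 h.1⟩
      refine ⟨S ∩ H, ⟨?_, H, hH, Set.inter_subset_right⟩,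
        fun A hA => key A (Set.mem_insert_of_mem _ hA)⟩
      exact (key univ (Set.mem_insert _ _)).1.mono Set.inter_subset_right)
    have hg : ∀ S : 𝒮, ∃ H ∈ ℋ, (S : Set ℕ) ⊆ H := fun S => (h𝒮 S.2).2
    choose g hgm hgs using hg
    refine ⟨Set.range g, ?_, lt_of_le_of_lt Cardinal.mk_range_le hcard, ?_⟩
    · rintro _ ⟨S, rfl⟩
      exact hgm S
    · intro 𝒜 hc hinf
      obtain ⟨S, hS, hS2⟩ := hsp 𝒜 hc hinf
      exact ⟨g ⟨S, hS⟩, Set.mem_range_self _, fun A hA =>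
        (hS2 A hA).1.mono (Set.inter_subset_inter_right _ (hgs ⟨S, hS⟩))⟩
  · intro h2 ℋ _ hℋ
    obtain ⟨𝒯, h𝒯, hcard, hhit⟩ := h2 (enc '' ℋ)
      (by rintro _ ⟨H, _, rfl⟩; exact enc_infinite H) (by
      intro 𝒜 hc hinf
      obtain ⟨H, hH, hs⟩ := hℋ
        {B | B.Infinite ∧ (B ∈ (fun A => (fun n => 2 * n) ⁻¹' A) '' 𝒜 ∨
          B ∈ (fun A => (fun n => 2 * n + 1) ⁻¹' A) '' 𝒜)}
        (((hc.image _).union (hc.image _)).mono fun B hB => hB.2) (fun B hB => hB.1)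
      refine ⟨enc H, ⟨H, hH, rfl⟩, fun A hA => ?_⟩
      have hor : ((fun n => 2 * n) ⁻¹' A).Infinite ∨ ((fun n => 2 * n + 1) ⁻¹' A).Infinite := by
        by_contra hcon
        rw [not_or, Set.not_infinite, Set.not_infinite] at hcon
        refine hinf A hA (((hcon.1.image (fun n => 2 * n)).union
          (hcon.2.image (fun n => 2 * n + 1))).subset ?_)
        intro x hx
        rcases Nat.even_or_odd' x with ⟨k, rfl | rfl⟩
        · exact Or.inl ⟨k, hx, rfl⟩
        · exact Or.inr ⟨k, hx, rfl⟩
      rcases hor with h | h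
      · refine ((hs _ ⟨h, Or.inl ⟨A, hA, rfl⟩⟩).1.image (f := fun n => 2 * n)
          (fun a _ b _ hab => by dsimp only at hab; omega)).mono ?_
        rintro _ ⟨k, ⟨hk1, hk2⟩, rfl⟩
        exact ⟨hk1, by simp [enc, hk2]⟩
      · refine ((hs _ ⟨h, Or.inr ⟨A, hA, rfl⟩⟩).2.image (f := fun n => 2 * n + 1)
          (fun a _ b _ hab => by dsimp only at hab; omega)).mono ?_
        rintro _ ⟨k, ⟨hk1, hk2⟩, rfl⟩
        have h2 : (2 * k + 1) / 2 = k := by omega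
        exact ⟨hk1, by simp [enc, hk2, h2]⟩)
    have hg : ∀ T : 𝒯, ∃ H ∈ ℋ, enc H = T := fun T => h𝒯 T.2
    choose g hgm hgs using hg
    refine ⟨Set.range g, ?_, lt_of_le_of_lt Cardinal.mk_range_le hcard, ?_⟩
    · rintro _ ⟨S, rfl⟩
      exact hgm S
    · intro 𝒜 hc hinf
      obtain ⟨T, hT, hT2⟩ := hhit
        ((fun A => (fun n => 2 * n) '' A) '' 𝒜 ∪ (fun A => (fun n => 2 * n + 1) '' A) '' 𝒜)
        ((hc.image _).union (hc.image _)) (by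
          rintro _ (⟨A, hA, rfl⟩ | ⟨A, hA, rfl⟩)
          · exact (hinf A hA).image (f := fun n => 2 * n) (fun a _ b _ hab => by dsimp only at hab; omega)
          · exact (hinf A hA).image (f := fun n => 2 * n + 1) (fun a _ b _ hab => by dsimp only at hab; omega))
      have hTe : enc (g ⟨T, hT⟩) = T := hgs ⟨T, hT⟩
      generalize hG : g ⟨T, hT⟩ = G at hTe
      refine ⟨G, hG ▸ Set.mem_range_self _, fun A hA => ⟨?_, ?_⟩⟩
      · have h := hT2 _ (Or.inl ⟨A, hA, rfl⟩)
        rw [← hTe] at h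
        refine Set.Infinite.of_image (fun n => 2 * n) (h.mono ?_)
        rintro _ ⟨⟨k, hk, rfl⟩, hk2⟩
        refine ⟨k, ⟨hk, ?_⟩, rfl⟩
        simpa [enc] using hk2
      · have h := hT2 _ (Or.inr ⟨A, hA, rfl⟩)
        rw [← hTe] at h
        refine Set.Infinite.of_image (fun n => 2 * n + 1) (h.mono ?_)
        rintro _ ⟨⟨k, hk, rfl⟩, hk2⟩
        refine ⟨k, ⟨hk, ?_⟩, rfl⟩
        have h2 : (2 * k + 1) / 2 = k := by omega
        simpa [enc, h2] using hk2
end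

section
/- For A ⊆ ℕ, let A* = {2n : n ∈ A} ∪ {2n+1 : n ∉ A}. If 𝒜 ⊆ [ω]^ω is an ω-splitting family, then 𝒜* = {A* : A ∈ 𝒜} is an ω-hitting family. -/
open Set Topology

/-- `A* = {2n : n ∈ A} ∪ {2n+1 : n ∉ A}`. -/
def starSet (A : Set ℕ) : Set ℕ := (fun n => 2 * n) '' A ∪ (fun n => 2 * n + 1) '' Aᶜ

/-- If `𝒜 ⊆ [ω]^ω` is ω-splitting, then `𝒜* = {A* : A ∈ 𝒜}` is ω-hitting. -/
theorem stmt_11 (𝒜 : Set (Set ℕ)) (h𝒜 : ∀ A ∈ 𝒜, A.Infinite) (hs : OmegaSplitting 𝒜) :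
    OmegaHitting (starSet '' 𝒜) := by
  intro ℬ hc hi
  obtain ⟨H, hH, hsp⟩ := hs
    (((fun B : Set ℕ => (fun n => 2 * n) ⁻¹' B) '' ℬ ∪
      (fun B : Set ℕ => (fun n => 2 * n + 1) ⁻¹' B) '' ℬ) ∩ {X | X.Infinite})
    (((hc.image _).union (hc.image _)).mono inter_subset_left) (fun A hA => hA.2)
  refine ⟨starSet H, ⟨H, hH, rfl⟩, fun B hB => ?_⟩
  by_cases hE : ((fun n => 2 * n) ⁻¹' B).Infinite
  · have h := (hsp _ ⟨Or.inl ⟨B, hB, rfl⟩, hE⟩).1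
    refine (h.image (f := fun n => 2 * n) (fun a _ b _ hab => by
      simp only at hab; omega)).mono ?_
    rintro _ ⟨n, ⟨hn, hnH⟩, rfl⟩
    exact ⟨hn, Or.inl ⟨n, hnH, rfl⟩⟩
  · have hO : ((fun n => 2 * n + 1) ⁻¹' B).Infinite := by
      intro hO
      refine hi B hB ((((not_infinite.mp hE).image (fun n => 2 * n)).union
        (hO.image (fun n => 2 * n + 1))).subset ?_)
      intro m hm
      rcases Nat.even_or_odd' m with ⟨k, rfl | rfl⟩
      · exact Or.inl ⟨k, hm, rfl⟩
      · exact Or.inr ⟨k, hm, rfl⟩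
    have h := (hsp _ ⟨Or.inr ⟨B, hB, rfl⟩, hO⟩).2
    refine (h.image (f := fun n => 2 * n + 1) (fun a _ b _ hab => by
      simp only at hab; omega)).mono ?_
    rintro _ ⟨n, ⟨hn, hnH⟩, rfl⟩
    exact ⟨hn, Or.inr ⟨n, hnH, rfl⟩⟩
end

section
/- For A ⊆ ℕ, let A* = {2n : n ∈ A} ∪ {2n+1 : n ∉ A}. If 𝒜₀ ⊆ [ω]^ω is a family such that 𝒜₀* = {A* : A ∈ 𝒜₀} is ω-hitting, then 𝒜₀ is ω-splitting. -/
open Set Topology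

/-- If `𝒜₀ ⊆ [ω]^ω` is such that `𝒜₀* = {A* : A ∈ 𝒜₀}` is ω-hitting, then `𝒜₀`
is ω-splitting. -/
theorem stmt_12 (𝒜₀ : Set (Set ℕ)) (h𝒜₀ : ∀ A ∈ 𝒜₀, A.Infinite)
    (hh : OmegaHitting (starSet '' 𝒜₀)) :
    OmegaSplitting 𝒜₀ := by
  intro 𝒜 hc hinf
  obtain ⟨_, ⟨H, hH, rfl⟩, hhit⟩ := hh
    ((fun A => (fun n => 2 * n) '' A) '' 𝒜 ∪ (fun A => (fun n => 2 * n + 1) '' A) '' 𝒜)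
    ((hc.image _).union (hc.image _)) (by
      rintro _ (⟨A, hA, rfl⟩ | ⟨A, hA, rfl⟩)
      · exact (hinf A hA).image (fun a _ b _ h => by omega)
      · exact (hinf A hA).image (fun a _ b _ h => by omega))
  refine ⟨H, hH, fun A hA => ⟨?_, ?_⟩⟩
  · have h1 := hhit _ (Or.inl ⟨A, hA, rfl⟩)
    refine Set.Infinite.of_image (fun n => 2 * n) (h1.mono ?_)
    rintro _ ⟨⟨n, hn, rfl⟩, ⟨m, hm, he⟩ | ⟨m, hm, he⟩⟩
    · simp only at he
      obtain rfl : m = n := by omega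
      exact ⟨m, ⟨hn, hm⟩, rfl⟩
    · simp only at he
      omega
  · have h1 := hhit _ (Or.inr ⟨A, hA, rfl⟩)
    refine Set.Infinite.of_image (fun n => 2 * n + 1) (h1.mono ?_)
    rintro _ ⟨⟨n, hn, rfl⟩, ⟨m, hm, he⟩ | ⟨m, hm, he⟩⟩
    · simp only at he
      omega
    · simp only at he
      obtain rfl : m = n := by omega
      exact ⟨m, ⟨hn, hm⟩, rfl⟩
end
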